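/- Let G = ⟨H, t | t⁻¹ x t = x for x ∈ X⟩ be an HNN extension over a central subgroup X of H, fix k ∈ H \ X, and for each natural number q ≥ 1 set [q] = t^q k t^{-q} ∈ G. Then for distinct positive integers p ≠ q, the element [p]⁻¹[q] does not lie in the image of H in G; more generally, any product [p₁]⁻¹[q₁][p₂]⁻¹[q₂]⋯[p_m]⁻¹[q_m] with m ≥ 1, pᵢ ≠ qᵢ for all i, and qᵢ ≠ p_{i+1} for all i < m, does not lie in the image of H. -/

import Mathlib

namespace HNNExtension

variable {G : Type*} [Group G] {X : Subgroup G}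

/-- `x` is represented by a reduced word of positive length beginning with the stable letter
or its inverse. -/
def HasReducedForm (x : HNNExtension G X X (MulEquiv.refl X)) : Prop :=
  ∃ w : NormalWord.ReducedWord G X X, w.head = 1 ∧ w.toList ≠ [] ∧
    w.prod (MulEquiv.refl X) = x

theorem mem_toSubgroup_self {u : ℤˣ} {g : G} : g ∈ toSubgroup X X u ↔ g ∈ X := by
  rcases Int.units_eq_one_or u with rfl | rfl <;> rfl

/-- **Britton's Lemma** for `HasReducedForm`. -/
theorem HasReducedForm.notMem_range {x : HNNExtension G X X (MulEquiv.refl X)}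
    (hx : HasReducedForm x) :
    x ∉ (of : G →* HNNExtension G X X (MulEquiv.refl X)).range := by
  obtain ⟨w, -, hne, rfl⟩ := hx
  exact fun h => hne (ReducedWord.toList_eq_nil_of_mem_of_range _ w h)

theorem exists_unit_mul_succ {n : ℤ} (hn : n ≠ 0) :
    ∃ (u : ℤˣ) (j : ℕ), n = u * ((j : ℤ) + 1) := by
  rcases lt_or_gt_of_ne hn with h | h
  · exact ⟨-1, (-n - 1).toNat, by simp; lia⟩
  · exact ⟨1, (n - 1).toNat, by simp; lia⟩

/-- A nonzero power of the stable letter followed by a base element can be prepended to a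
reduced word, provided no pinch is created. -/
theorem hasReducedForm_zpow_mul_of_mul_prod {n : ℤ} (hn : n ≠ 0) (g : G) (l : List (ℤˣ × G))
    (hl : l.IsChain fun a b => a.2 ∈ toSubgroup X X a.1 → a.1 = b.1)
    (hg : g ∉ X ∨ l = []) :
    HasReducedForm (X := X) (t ^ n * of g * (l.map fun x => t ^ (x.1 : ℤ) * of x.2).prod) := by
  obtain ⟨u, j, rfl⟩ := exists_unit_mul_succ hn
  clear hn
  suffices h : ∃ (g' : G) (l' : List (ℤˣ × G)),
      ((u, g') :: l').IsChain
        (fun a b => a.2 ∈ toSubgroup X X a.1 → a.1 = b.1) ∧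
      (((u, g') :: l').map fun x => t ^ (x.1 : ℤ) * of x.2).prod =
        (t ^ ((u : ℤ) * ((j : ℤ) + 1)) * of g *
          (l.map fun x => t ^ (x.1 : ℤ) * of x.2).prod :
            HNNExtension G X X (MulEquiv.refl X)) by
    obtain ⟨g', l', hc, hp⟩ := h
    exact ⟨⟨1, _, hc⟩, rfl, by simp, by simpa [NormalWord.ReducedWord.prod] using hp⟩
  induction j with
  | zero =>
    refine ⟨g, l, ?_, by simp⟩
    refine List.isChain_cons.2 ⟨fun y hy h => ?_, hl⟩
    rcases hg with hg | rfl
    · exact absurd (mem_toSubgroup_self.1 h) hg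
    · simp at hy
  | succ j ih =>
    obtain ⟨g', l', hc, hp⟩ := ih
    refine ⟨1, (u, g') :: l', ?_, ?_⟩
    · exact List.isChain_cons.2 ⟨fun y hy _ => by simp at hy; simp [← hy], hc⟩
    · rw [List.map_cons, List.prod_cons, hp]
      have : (u : ℤ) * (((j + 1 : ℕ) : ℤ) + 1) = u + u * ((j : ℤ) + 1) := by push_cast; ring
      rw [this, zpow_add]
      simp [mul_assoc]

theorem HasReducedForm.zpow_t {n : ℤ} (hn : n ≠ 0) :
    HasReducedForm (X := X) (t ^ n) := by
  simpa using hasReducedForm_zpow_mul_of_mul_prod (X := X) hn 1 [] List.isChain_nil (Or.inr rfl)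

theorem HasReducedForm.zpow_t_mul_of_mul {x : HNNExtension G X X (MulEquiv.refl X)}
    (hx : HasReducedForm x) {n : ℤ} (hn : n ≠ 0) {g : G} (hg : g ∉ X) :
    HasReducedForm (t ^ n * of g * x) := by
  obtain ⟨w, hw, -, rfl⟩ := hx
  simpa [NormalWord.ReducedWord.prod, hw] using
    hasReducedForm_zpow_mul_of_mul_prod hn g w.toList w.chain (Or.inl hg)

theorem hasReducedForm_zpow_neg_mul_prod_conj {k : G} (hk : k ∉ X) (m : ℕ) (e : ℕ)
    (p q : Fin m → ℕ) (he : m = 0 → e ≠ 0) (hep : ∀ h : 0 < m, e ≠ p ⟨0, h⟩)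
    (hq : ∀ i, 1 ≤ q i) (hpq : ∀ i, p i ≠ q i)
    (hqp : ∀ (i : Fin m) (hi : (i : ℕ) + 1 < m), q i ≠ p ⟨(i : ℕ) + 1, hi⟩) :
    HasReducedForm (t ^ (-(e : ℤ)) * (List.ofFn (fun i : Fin m =>
        ((t : HNNExtension G X X (MulEquiv.refl X)) ^ (p i : ℤ) *
            of k * t ^ (-(p i : ℤ)))⁻¹ *
          (t ^ (q i : ℤ) * of k * t ^ (-(q i : ℤ))))).prod) := by
  induction m generalizing e with
  | zero => simpa using HasReducedForm.zpow_t (X := X) (n := -(e : ℤ)) (by simpa using he)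
  | succ m ih =>
    have tail := ih (q 0) (fun i => p i.succ) (fun i => q i.succ)
      (fun _ => Nat.one_le_iff_ne_zero.1 (hq 0)) (fun h => hqp 0 (by simpa using h))
      (fun i => hq _) (fun i => hpq _)
      (fun i hi => hqp i.succ (by simpa using hi))
    have hp0 := hep m.succ_pos
    have hpq0 := hpq 0
    have key := (tail.zpow_t_mul_of_mul (n := (q 0 : ℤ) - p 0) (by lia) hk).zpow_t_mul_of_mul
      (n := (p 0 : ℤ) - e) (by change e ≠ p 0 at hp0; lia) (mt inv_mem_iff.1 hk)
    rw [List.ofFn_succ, List.prod_cons]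
    convert key using 1
    rw [map_inv]
    group

end HNNExtension

/-- Let `G = ⟨H, t | t⁻¹ x t = x, x ∈ X⟩` with `X` a central subgroup of `H`,
`k ∈ H \ X`, and `[q] = t^q k t^{-q}`. Then any product
`[p₁]⁻¹[q₁][p₂]⁻¹[q₂]⋯[p_m]⁻¹[q_m]` with `m ≥ 1`, `pᵢ ≠ qᵢ` and `qᵢ ≠ p_{i+1}`
(all `pᵢ, qᵢ ≥ 1`) does not lie in the image of `H`. -/
theorem stmt_9 {H : Type*} [Group H] (X : Subgroup H)
    (hX : X ≤ Subgroup.center H) (k : H) (hk : k ∉ X)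
    (m : ℕ) (hm : 1 ≤ m) (p q : Fin m → ℕ)
    (hp : ∀ i, 1 ≤ p i) (hq : ∀ i, 1 ≤ q i)
    (hpq : ∀ i, p i ≠ q i)
    (hqp : ∀ (i : Fin m) (hi : (i : ℕ) + 1 < m), q i ≠ p ⟨(i : ℕ) + 1, hi⟩) :
    (List.ofFn (fun i : Fin m =>
        ((HNNExtension.t : HNNExtension H X X (MulEquiv.refl ↥X)) ^ (p i : ℤ) *
            HNNExtension.of k * HNNExtension.t ^ (-(p i : ℤ)))⁻¹ *
          (HNNExtension.t ^ (q i : ℤ) * HNNExtension.of k *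
            HNNExtension.t ^ (-(q i : ℤ))))).prod ∉
      (HNNExtension.of : H →* HNNExtension H X X (MulEquiv.refl ↥X)).range := by
  have h := (HNNExtension.hasReducedForm_zpow_neg_mul_prod_conj hk m 0 p q (by lia)
    (fun h => (Nat.one_le_iff_ne_zero.1 (hp ⟨0, h⟩)).symm) hq hpq hqp).notMem_range
  rwa [Nat.cast_zero, neg_zero, zpow_zero, one_mul] at h
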